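/- Let k ∈ ℕ, r ∈ ℕ₀, and let ε : (0,1] → (0,∞) be continuous with ε(x) → 0 as x → 0⁺. Then there exists F ∈ C^r[0,1] such that for every algebraic polynomial P, limsup_{x→0⁺} |F(x) − P(x)| / ω_k(F^(r), ε(x)·x^((r+1)/k); [0,1]) = ∞, where ω_k denotes the k-th modulus of smoothness on [0,1]. -/

import Mathlib

open Set Filter

/-- The `k`-th modulus of smoothness of `f` on `[a,b]`:
`ω_k(f,t;[a,b]) = sup_{0<u≤t} sup { |Δ_u^k(f,x)| : x ± ku/2 ∈ [a,b] }`. -/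
noncomputable def wmod (k : ℕ) (f : ℝ → ℝ) (t a b : ℝ) : ℝ :=
  sSup {v : ℝ | ∃ u x : ℝ, 0 < u ∧ u ≤ t ∧ a ≤ x - k * u / 2 ∧ x + k * u / 2 ≤ b ∧
    v = |∑ i ∈ Finset.range (k + 1),
          (-1 : ℝ) ^ i * (k.choose i : ℝ) * f (x + ((k : ℝ) / 2 - i) * u)|}

/-- The `n`-fold iterated integral of `g` based at `0`. -/
noncomputable def iteratedPrimitive (g : ℝ → ℝ) : ℕ → ℝ → ℝ
  | 0 => g
  | n + 1 => fun x => ∫ y in (0:ℝ)..x, iteratedPrimitive g n y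

lemma continuous_iteratedPrimitive {g : ℝ → ℝ} (hg : Continuous g) (n : ℕ) :
    Continuous (iteratedPrimitive g n) := by
  induction n with
  | zero => exact hg
  | succ n ih =>
    exact intervalIntegral.continuous_primitive (fun a b => ih.intervalIntegrable a b) 0

lemma hasDerivAt_iteratedPrimitive_succ {g : ℝ → ℝ} (hg : Continuous g) (n : ℕ) (x : ℝ) :
    HasDerivAt (iteratedPrimitive g (n + 1)) (iteratedPrimitive g n x) x :=
  (continuous_iteratedPrimitive hg n).integral_hasStrictDerivAt 0 x |>.hasDerivAt

lemma deriv_iteratedPrimitive_succ {g : ℝ → ℝ} (hg : Continuous g) (n : ℕ) :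
    deriv (iteratedPrimitive g (n + 1)) = iteratedPrimitive g n :=
  funext fun x => (hasDerivAt_iteratedPrimitive_succ hg n x).deriv

lemma contDiff_iteratedPrimitive {g : ℝ → ℝ} (hg : Continuous g) (n : ℕ) :
    ContDiff ℝ n (iteratedPrimitive g n) := by
  induction n with
  | zero => exact contDiff_zero.2 hg
  | succ n ih =>
    push_cast
    refine contDiff_succ_iff_deriv.2
      ⟨fun x => (hasDerivAt_iteratedPrimitive_succ hg n x).differentiableAt, by simp, ?_⟩
    rw [deriv_iteratedPrimitive_succ hg]
    exact ih

lemma iteratedDeriv_iteratedPrimitive {g : ℝ → ℝ} (hg : Continuous g) (n : ℕ) :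
    iteratedDeriv n (iteratedPrimitive g n) = g := by
  induction n with
  | zero => simp [iteratedPrimitive]
  | succ n ih => rw [iteratedDeriv_succ', deriv_iteratedPrimitive_succ hg, ih]

lemma le_iteratedPrimitive {g : ℝ → ℝ} (hg : Continuous g) {c d : ℝ}
    (h : ∀ x ∈ Icc 0 d, c * x ≤ g x) (n : ℕ) :
    ∀ x ∈ Icc 0 d, c / (n + 1).factorial * x ^ (n + 1) ≤ iteratedPrimitive g n x := by
  induction n with
  | zero => simpa [iteratedPrimitive] using h
  | succ n ih =>
    intro x hx
    have hint : ∫ y in (0:ℝ)..x, c / (n + 1).factorial * y ^ (n + 1)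
        = c / (n + 1 + 1).factorial * x ^ (n + 1 + 1) := by
      rw [intervalIntegral.integral_const_mul, integral_pow, Nat.factorial_succ (n + 1)]
      push_cast
      field_simp
      simp
    rw [← hint]
    refine intervalIntegral.integral_mono_on hx.1 ?_ ?_ fun y hy => ih y ⟨hy.1, hy.2.trans hx.2⟩
    · exact Continuous.intervalIntegrable (by fun_prop) _ _
    · exact (continuous_iteratedPrimitive hg n).intervalIntegrable _ _

lemma abs_iteratedPrimitive_le {g : ℝ → ℝ} {c d : ℝ}
    (h : ∀ x ∈ Icc 0 d, |g x| ≤ c) (n : ℕ) :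
    ∀ x ∈ Icc 0 d, |iteratedPrimitive g n x| ≤ c * x ^ n := by
  induction n with
  | zero => simpa [iteratedPrimitive] using h
  | succ n ih =>
    intro x hx
    have hc : 0 ≤ c := (abs_nonneg _).trans (h x hx)
    have key := intervalIntegral.norm_integral_le_of_norm_le_const
      (a := (0:ℝ)) (b := x) (C := c * x ^ n) (f := iteratedPrimitive g n) fun y hy => by
        rw [uIoc_of_le hx.1] at hy
        refine (ih y ⟨hy.1.le, hy.2.trans hx.2⟩).trans ?_
        have := hy.1.le
        have := hy.2
        gcongr
    rw [sub_zero, abs_of_nonneg hx.1, Real.norm_eq_abs] at key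
    rw [pow_succ, ← mul_assoc]
    exact key

/-- A function that vanishes to order `o(x ^ r)` at `0⁺` but dominates every multiple of
`x ^ (r + 1)` stays away from every polynomial by more than any multiple of `x ^ (r + 1)`. -/
lemma eventually_mul_pow_lt_abs_sub_eval {F : ℝ → ℝ} {r : ℕ}
    (hlow : ∀ A : ℝ, ∀ᶠ x in nhdsWithin 0 (Ioi 0), A * x ^ (r + 1) ≤ F x)
    (hupp : ∀ η : ℝ, 0 < η → ∀ᶠ x in nhdsWithin 0 (Ioi 0), |F x| ≤ η * x ^ r)
    (P : Polynomial ℝ) (M : ℝ) :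
    ∀ᶠ x in nhdsWithin 0 (Ioi 0), M * x ^ (r + 1) < |F x - P.eval x| := by
  have hpos : ∀ᶠ x : ℝ in nhdsWithin 0 (Ioi 0), 0 < x := self_mem_nhdsWithin
  have hlt : ∀ a : ℝ, 0 < a → ∀ᶠ x : ℝ in nhdsWithin 0 (Ioi 0), x < a := fun a ha =>
    nhdsWithin_le_nhds (Iio_mem_nhds ha)
  rcases eq_or_ne P 0 with rfl | hP
  · filter_upwards [hlow (M + 1), hpos] with x hx h0
    have := pow_pos h0 (r + 1)
    rw [Polynomial.eval_zero, sub_zero]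
    exact lt_of_lt_of_le (by nlinarith) (le_abs_self _)
  obtain ⟨Q, hQ, hQ0⟩ := Polynomial.exists_eq_pow_rootMultiplicity_mul_and_not_dvd P hP 0
  set m := P.rootMultiplicity 0
  have heval : ∀ x, P.eval x = x ^ m * Q.eval x := fun x => by
    conv_lhs => rw [hQ]
    simp
  rw [Polynomial.dvd_iff_isRoot, Polynomial.IsRoot.def] at hQ0
  have hq : 0 < |Q.eval 0| := abs_pos.2 hQ0
  have hQt : Tendsto (fun x => |Q.eval x|) (nhdsWithin 0 (Ioi 0)) (nhds |Q.eval 0|) :=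
    (Q.continuous.abs.tendsto 0).mono_left nhdsWithin_le_nhds
  rcases le_or_gt m r with hm | hm
  · filter_upwards [hpos, hlt 1 one_pos, hlt (|Q.eval 0| / (4 * (|M| + 1))) (by positivity),
      hupp (|Q.eval 0| / 4) (by positivity), hQt.eventually_const_lt (half_lt_self hq)]
      with x h0 h1 hx hF hQx
    rw [heval]
    have hxr := pow_pos h0 r
    have hpow : x ^ r ≤ x ^ m := pow_le_pow_of_le_one h0.le h1.le hm
    have hPx : |Q.eval 0| / 2 * x ^ r ≤ |x ^ m * Q.eval x| := by
      rw [abs_mul, abs_of_pos (pow_pos h0 m), mul_comm]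
      gcongr
    have htri := abs_sub_abs_le_abs_sub (x ^ m * Q.eval x) (F x)
    rw [abs_sub_comm] at htri
    rw [lt_div_iff₀ (by positivity)] at hx
    have hMx : M * x < |Q.eval 0| / 4 := by nlinarith [le_abs_self M]
    calc M * x ^ (r + 1) = M * x * x ^ r := by ring
      _ < |Q.eval 0| / 4 * x ^ r := by gcongr
      _ ≤ _ := by linarith
  · filter_upwards [hpos, hlt 1 one_pos, hlow (M + 1 + (|Q.eval 0| + 1)),
      hQt.eventually_lt_const (lt_add_one _)] with x h0 h1 hF hQx
    rw [heval]
    have hxr := pow_pos h0 (r + 1)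
    have hpow : x ^ m ≤ x ^ (r + 1) := pow_le_pow_of_le_one h0.le h1.le hm
    have hPx : |x ^ m * Q.eval x| ≤ x ^ (r + 1) * (|Q.eval 0| + 1) := by
      rw [abs_mul, abs_of_pos (pow_pos h0 m)]
      gcongr
    have := le_abs_self (x ^ m * Q.eval x)
    refine lt_of_lt_of_le ?_ (le_abs_self _)
    nlinarith

/-- The symmetric `k`-th difference of `f` with step `u` at `x`. -/
noncomputable def symmDifference (k : ℕ) (f : ℝ → ℝ) (u x : ℝ) : ℝ :=
  ∑ i ∈ Finset.range (k + 1), (-1 : ℝ) ^ i * (k.choose i : ℝ) * f (x + ((k : ℝ) / 2 - i) * u)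

lemma mem_Icc_of_symmDifference_node {k i : ℕ} (hi : i ∈ Finset.range (k + 1)) {u x a b : ℝ}
    (hu : 0 < u) (ha : a ≤ x - k * u / 2) (hb : x + k * u / 2 ≤ b) :
    x + ((k : ℝ) / 2 - i) * u ∈ Icc a b := by
  have hik : (i : ℝ) ≤ k := by exact_mod_cast Finset.mem_range_succ_iff.1 hi
  have hi0 : (0:ℝ) ≤ i := i.cast_nonneg
  constructor <;> nlinarith

lemma symmDifference_congr {k : ℕ} {f g : ℝ → ℝ} {u x a b : ℝ} (h : EqOn f g (Icc a b))
    (hu : 0 < u) (ha : a ≤ x - k * u / 2) (hb : x + k * u / 2 ≤ b) :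
    symmDifference k f u x = symmDifference k g u x :=
  Finset.sum_congr rfl fun _ hi => by rw [h (mem_Icc_of_symmDifference_node hi hu ha hb)]

lemma wmod_le {k : ℕ} {f : ℝ → ℝ} {t a b B : ℝ} (hB : 0 ≤ B)
    (h : ∀ u x, 0 < u → u ≤ t → a ≤ x - k * u / 2 → x + k * u / 2 ≤ b →
      |symmDifference k f u x| ≤ B) : wmod k f t a b ≤ B := by
  refine Real.sSup_le ?_ hB
  rintro v ⟨u, x, hu, hut, ha, hb, rfl⟩
  exact h u x hu hut ha hb

lemma wmod_nonneg (k : ℕ) (f : ℝ → ℝ) (t a b : ℝ) : 0 ≤ wmod k f t a b := by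
  refine Real.sSup_nonneg ?_
  rintro v ⟨u, x, -, -, -, -, rfl⟩
  exact abs_nonneg _

/-- A smooth ramp of slope `1` at `0` that saturates at height `h`. -/
noncomputable def ramp (h x : ℝ) : ℝ := h * (1 - Real.exp (-|x| / h))

lemma continuous_ramp (h : ℝ) : Continuous (ramp h) := by
  unfold ramp
  fun_prop

lemma ramp_nonneg {h : ℝ} (hh : 0 < h) (x : ℝ) : 0 ≤ ramp h x := by
  refine mul_nonneg hh.le (sub_nonneg.2 (Real.exp_le_one_iff.2 ?_))
  rw [neg_div]
  exact neg_nonpos.2 (by positivity)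

lemma ramp_le {h : ℝ} (hh : 0 < h) (x : ℝ) : ramp h x ≤ h := by
  have := Real.exp_pos (-|x| / h)
  unfold ramp
  nlinarith

lemma half_le_ramp {h x : ℝ} (hh : 0 < h) (hx : x ∈ Icc 0 h) : x / 2 ≤ ramp h x := by
  have hy0 : 0 ≤ x / h := div_nonneg hx.1 hh.le
  have hy1 : x / h ≤ 1 := (div_le_one hh).2 hx.2
  have hexp : Real.exp (-(x / h)) ≤ 1 - x / h / 2 := by
    rw [Real.exp_neg]
    refine inv_le_of_inv_le₀ (by linarith) (le_trans ?_ (Real.add_one_le_exp (x / h)))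
    rw [inv_le_iff_one_le_mul₀ (by linarith)]
    nlinarith
  calc x / 2 = h * (x / h / 2) := by field_simp
    _ ≤ ramp h x := by
      unfold ramp
      rw [abs_of_nonneg hx.1, neg_div]
      gcongr
      linarith

lemma symmDifference_ramp {k : ℕ} (hk : 1 ≤ k) {h u x : ℝ} (hu : 0 < u)
    (hx : 0 ≤ x - k * u / 2) :
    symmDifference k (ramp h) u x
      = -(h * (Real.exp (-(x - k * u / 2) / h) * (Real.exp (-u / h) - 1) ^ k)) := by
  have hconst : ∑ i ∈ Finset.range (k + 1), (-1 : ℝ) ^ i * (k.choose i : ℝ) = 0 := by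
    have := add_pow (-1 : ℝ) 1 k
    simpa [show k ≠ 0 by omega] using this.symm
  have hbin : Real.exp (-(x - k * u / 2) / h) * (Real.exp (-u / h) - 1) ^ k
      = ∑ i ∈ Finset.range (k + 1), (-1 : ℝ) ^ i * (k.choose i : ℝ) *
          Real.exp (-|x + ((k : ℝ) / 2 - i) * u| / h) := by
    rw [sub_eq_neg_add (Real.exp (-u / h)), add_pow, Finset.mul_sum]
    refine Finset.sum_congr rfl fun i hi => ?_
    have hnode := (mem_Icc_of_symmDifference_node hi hu hx le_rfl).1
    have hik : i ≤ k := Finset.mem_range_succ_iff.1 hi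
    rw [abs_of_nonneg hnode, ← Real.exp_nat_mul, Nat.cast_sub hik]
    have : Real.exp (-(x + ((k : ℝ) / 2 - i) * u) / h)
        = Real.exp (-(x - k * u / 2) / h) * Real.exp (((k : ℝ) - i) * (-u / h)) := by
      rw [← Real.exp_add]
      congr 1
      ring
    rw [this]
    ring
  rw [hbin, symmDifference, Finset.mul_sum, ← Finset.sum_neg_distrib, ← sub_eq_zero,
    ← Finset.sum_sub_distrib]
  rw [← mul_zero h, ← hconst, Finset.mul_sum]
  refine Finset.sum_congr rfl fun i _ => ?_
  unfold ramp
  ring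

lemma abs_symmDifference_ramp_le {k : ℕ} (hk : 1 ≤ k) {h u x : ℝ} (hh : 0 < h) (hu : 0 < u)
    (hx : 0 ≤ x - k * u / 2) :
    |symmDifference k (ramp h) u x| ≤ h * (min 1 (u / h)) ^ k := by
  have hE : |Real.exp (-(x - k * u / 2) / h)| ≤ 1 := by
    rw [abs_of_pos (Real.exp_pos _), Real.exp_le_one_iff]
    exact div_nonpos_of_nonpos_of_nonneg (by linarith) hh.le
  have hD : |Real.exp (-u / h) - 1| ≤ min 1 (u / h) := by
    have h1 : Real.exp (-u / h) ≤ 1 :=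
      Real.exp_le_one_iff.2 (div_nonpos_of_nonpos_of_nonneg (by linarith) hh.le)
    have h2 := Real.exp_pos (-u / h)
    have h3 := Real.add_one_le_exp (-u / h)
    rw [abs_of_nonpos (by linarith)]
    rw [neg_div] at *
    exact le_min (by linarith) (by linarith)
  rw [symmDifference_ramp hk hu hx, abs_neg, abs_mul, abs_mul, abs_pow, abs_of_pos hh]
  calc h * (|Real.exp (-(x - k * u / 2) / h)| * |Real.exp (-u / h) - 1| ^ k)
      ≤ h * (1 * (min 1 (u / h)) ^ k) := by gcongr
    _ = _ := by rw [one_mul]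

/-- The superposition of ramps of heights `h n`. -/
noncomputable def rampSum (h : ℕ → ℝ) (x : ℝ) : ℝ := ∑' n, ramp (h n) x

section RampSum

variable {h : ℕ → ℝ}

lemma summable_ramp (hpos : ∀ n, 0 < h n) (hsum : Summable h) (x : ℝ) :
    Summable fun n => ramp (h n) x :=
  hsum.of_nonneg_of_le (fun n => ramp_nonneg (hpos n) x) fun n => ramp_le (hpos n) x

lemma continuous_rampSum (hpos : ∀ n, 0 < h n) (hsum : Summable h) : Continuous (rampSum h) :=
  continuous_tsum (fun n => continuous_ramp (h n)) hsum fun n x => by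
    rw [Real.norm_of_nonneg (ramp_nonneg (hpos n) x)]
    exact ramp_le (hpos n) x

lemma rampSum_zero : rampSum h 0 = 0 := by simp [rampSum, ramp]

lemma le_rampSum (hpos : ∀ n, 0 < h n) (hsum : Summable h) (hanti : Antitone h) (n : ℕ) {x : ℝ}
    (hx : x ∈ Icc 0 (h n)) : n / 2 * x ≤ rampSum h x :=
  calc (n : ℝ) / 2 * x = ∑ _j ∈ Finset.range n, x / 2 := by
        rw [Finset.sum_const, Finset.card_range, nsmul_eq_mul]
        ring
    _ ≤ ∑ j ∈ Finset.range n, ramp (h j) x := Finset.sum_le_sum fun j hj =>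
        half_le_ramp (hpos j) ⟨hx.1, hx.2.trans (hanti (Finset.mem_range.1 hj).le)⟩
    _ ≤ rampSum h x := (summable_ramp hpos hsum x).sum_le_tsum _
        fun j _ => ramp_nonneg (hpos j) x

lemma abs_symmDifference_rampSum_le {k : ℕ} (hk : 1 ≤ k) (hpos : ∀ n, 0 < h n)
    (hsum : Summable h) (hanti : Antitone h) (hone : h 0 ≤ 1) (n : ℕ) {u x : ℝ} (hu : 0 < u)
    (hx : 0 ≤ x - k * u / 2) :
    |symmDifference k (rampSum h) u x| ≤ (n + 1) * (u / h n) ^ k + ∑' j, h (j + (n + 1)) := by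
  have hS : HasSum (fun j => symmDifference k (ramp (h j)) u x)
      (symmDifference k (rampSum h) u x) :=
    hasSum_sum fun i _ => (summable_ramp hpos hsum _).hasSum.mul_left _
  have hb : ∀ j, |symmDifference k (ramp (h j)) u x| ≤ h j * (min 1 (u / h j)) ^ k := fun j =>
    abs_symmDifference_ramp_le hk (hpos j) hu hx
  have hmin : ∀ j, 0 ≤ min 1 (u / h j) := fun j => le_min zero_le_one (div_pos hu (hpos j)).le
  have htail : ∀ j, |symmDifference k (ramp (h j)) u x| ≤ h j := fun j =>
    (hb j).trans (mul_le_of_le_one_right (hpos j).le (pow_le_one₀ (hmin j) (min_le_left _ _)))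
  have habs : Summable fun j => |symmDifference k (ramp (h j)) u x| :=
    hsum.of_nonneg_of_le (fun _ => abs_nonneg _) htail
  calc |symmDifference k (rampSum h) u x|
      = |∑' j, symmDifference k (ramp (h j)) u x| := by rw [hS.tsum_eq]
    _ ≤ ∑' j, |symmDifference k (ramp (h j)) u x| := by
      simpa only [Real.norm_eq_abs] using norm_tsum_le_tsum_norm
        (f := fun j => symmDifference k (ramp (h j)) u x) habs
    _ = ∑ j ∈ Finset.range (n + 1), |symmDifference k (ramp (h j)) u x|
        + ∑' j, |symmDifference k (ramp (h (j + (n + 1)))) u x| :=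
      (habs.sum_add_tsum_nat_add (n + 1)).symm
    _ ≤ ∑ _j ∈ Finset.range (n + 1), (u / h n) ^ k + ∑' j, h (j + (n + 1)) := by
      refine add_le_add (Finset.sum_le_sum fun j hj => (hb j).trans ?_)
        (((summable_nat_add_iff (n + 1)).2 habs).tsum_le_tsum (fun j => htail _)
          ((summable_nat_add_iff (n + 1)).2 hsum))
      have hjn : h n ≤ h j := hanti (Finset.mem_range_succ_iff.1 hj)
      have hj1 : h j ≤ 1 := (hanti j.zero_le).trans hone
      have hle : min 1 (u / h j) ≤ u / h n :=
        (min_le_right _ _).trans (div_le_div_of_nonneg_left hu.le (hpos n) hjn)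
      calc h j * (min 1 (u / h j)) ^ k ≤ 1 * (u / h n) ^ k :=
            mul_le_mul hj1 (pow_le_pow_left₀ (hmin j) hle k) (pow_nonneg (hmin j) k) zero_le_one
        _ = _ := one_mul _
    _ = _ := by
      rw [Finset.sum_const, Finset.card_range, nsmul_eq_mul]
      push_cast
      rfl

end RampSum

lemma le_mul_half_pow {h : ℕ → ℝ} (hhalf : ∀ n, h (n + 1) ≤ h n / 2) (n j : ℕ) :
    h (j + n) ≤ h n * (1 / 2) ^ j := by
  induction j with
  | zero => simp
  | succ j ih =>
    rw [Nat.add_right_comm, pow_succ]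
    linarith [hhalf (j + n)]

/-- Rapidly decreasing ramp heights `h n`, interlaced with points `p n` at which `ε` is already
negligible compared with `h n`. -/
lemma exists_heights_and_points (k : ℕ) (hk : 1 ≤ k) (r : ℕ) {ε : ℝ → ℝ}
    (hεlim : Tendsto ε (nhdsWithin 0 (Ioi 0)) (nhds 0)) :
    ∃ h p : ℕ → ℝ, h 0 = 1 ∧ (∀ n, 0 < h n) ∧ (∀ n, h (n + 1) ≤ h n / 2) ∧
      (∀ n : ℕ, 0 < p n ∧ p n < 1 / ((n : ℝ) + 1)) ∧
      (∀ n : ℕ, ((n : ℝ) + 1) * (ε (p n) / h n) ^ k ≤ 1 / 2) ∧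
      ∀ n, h (n + 1) ≤ p n ^ (r + 1) / 4 := by
  have hex : ∀ (n : ℕ) (a : ℝ), ∃ x : ℝ, 0 < x ∧ x < 1 / ((n : ℝ) + 1) ∧
      ((n : ℝ) + 1) * (ε x / a) ^ k ≤ 1 / 2 := by
    intro n a
    have hlim : Tendsto (fun x => ((n : ℝ) + 1) * (ε x / a) ^ k) (nhdsWithin 0 (Ioi 0))
        (nhds 0) := by
      simpa [show k ≠ 0 by omega] using ((hεlim.div_const a).pow k).const_mul ((n : ℝ) + 1)
    have hpos : ∀ᶠ x : ℝ in nhdsWithin 0 (Ioi 0), 0 < x := self_mem_nhdsWithin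
    have hlt : ∀ᶠ x : ℝ in nhdsWithin 0 (Ioi 0), x < 1 / ((n : ℝ) + 1) :=
      nhdsWithin_le_nhds (Iio_mem_nhds (by positivity))
    obtain ⟨x, h1, h2, h3⟩ :=
      (hpos.and (hlt.and (hlim.eventually_le_const (by norm_num : (0:ℝ) < 1 / 2)))).exists
    exact ⟨x, h1, h2, h3⟩
  choose X hX0 hX1 hXε using hex
  let h : ℕ → ℝ := Nat.rec 1 fun n a => min (a / 2) (X n a ^ (r + 1) / 4)
  have hpos : ∀ n, 0 < h n := by
    intro n
    induction n with
    | zero => exact one_pos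
    | succ n ih => exact lt_min (half_pos ih) (div_pos (pow_pos (hX0 _ _) _) (by norm_num))
  exact ⟨h, fun n => X n (h n), rfl, hpos, fun n => min_le_left _ _,
    fun n => ⟨hX0 _ _, hX1 _ _⟩, fun n => hXε _ _, fun n => min_le_right _ _⟩

/-- Lemma 5.1, strong negative theorem on `[0,1]`: for `k ∈ ℕ`,
`r ∈ ℕ₀` and any positive continuous `ε` on `(0,1]` with `ε(x) → 0` as `x → 0⁺`,
there is `F ∈ C^r[0,1]` such that for every polynomial `P`,
`limsup_{x→0⁺} |F(x)−P(x)| / ω_k(F^(r), ε(x)·x^((r+1)/k); [0,1]) = ∞`. -/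
theorem stmt5 (k : ℕ) (hk : 1 ≤ k) (r : ℕ) (ε : ℝ → ℝ)
    (hεpos : ∀ x ∈ Ioc (0:ℝ) 1, 0 < ε x)
    (hεcont : ContinuousOn ε (Ioc 0 1))
    (hεlim : Tendsto ε (nhdsWithin 0 (Ioi 0)) (nhds 0)) :
    ∃ F : ℝ → ℝ, ContDiffOn ℝ r F (Icc 0 1) ∧
      ∀ P : Polynomial ℝ, ∀ M : ℝ, ∀ δ : ℝ, 0 < δ → ∃ x : ℝ,
        0 < x ∧ x ≤ 1 ∧ x < δ ∧
        M * wmod k (iteratedDerivWithin r F (Icc 0 1))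
            (ε x * x ^ (((r : ℝ) + 1) / k)) 0 1 < |F x - P.eval x| := by
  obtain ⟨h, p, h0, hpos, hhalf, hp, hpε, hph⟩ := exists_heights_and_points k hk r hεlim
  have hanti : Antitone h := antitone_nat_of_succ_le fun n => by linarith [hhalf n, hpos n]
  have hgeom : ∀ a : ℝ, HasSum (fun j : ℕ => a * (1 / 2) ^ j) (a * 2) := fun a =>
    hasSum_geometric_two.mul_left a
  have hsum : Summable h := (hgeom (h 0)).summable.of_nonneg_of_le (fun n => (hpos n).le)
    fun j => le_mul_half_pow hhalf 0 j
  have hcont := continuous_rampSum hpos hsum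
  have hmem : ∀ d : ℝ, 0 < d → ∀ᶠ x : ℝ in nhdsWithin 0 (Ioi 0), x ∈ Icc 0 d := fun d hd =>
    mem_of_superset (Ioc_mem_nhdsGT hd) Ioc_subset_Icc_self
  have hlow : ∀ A : ℝ, ∀ᶠ x in nhdsWithin 0 (Ioi 0),
      A * x ^ (r + 1) ≤ iteratedPrimitive (rampSum h) r x := by
    intro A
    obtain ⟨n, hn⟩ := exists_nat_ge (A * (r + 1).factorial * 2)
    filter_upwards [hmem (h n) (hpos n)] with x hx
    refine le_trans ?_ (le_iteratedPrimitive hcont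
      (fun y hy => le_rampSum hpos hsum hanti n hy) r x hx)
    have := hx.1
    gcongr
    rw [le_div_iff₀ (by positivity)]
    linarith
  have hupp : ∀ η : ℝ, 0 < η → ∀ᶠ x in nhdsWithin 0 (Ioi 0),
      |iteratedPrimitive (rampSum h) r x| ≤ η * x ^ r := by
    intro η hη
    obtain ⟨d, hd, hball⟩ := Metric.continuous_iff.1 hcont 0 η hη
    filter_upwards [hmem (d / 2) (half_pos hd)] with x hx
    refine abs_iteratedPrimitive_le (d := d / 2) (fun y hy => ?_) r x hx
    have := hball y (by rw [Real.dist_0_eq_abs, abs_of_nonneg hy.1]; linarith [hy.2])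
    rw [rampSum_zero, Real.dist_0_eq_abs] at this
    exact this.le
  have hderiv : EqOn (iteratedDerivWithin r (iteratedPrimitive (rampSum h) r) (Icc 0 1))
      (rampSum h) (Icc 0 1) := fun x hx => by
    rw [iteratedDerivWithin_eq_iteratedDeriv (uniqueDiffOn_Icc zero_lt_one)
      (contDiff_iteratedPrimitive hcont r).contDiffAt hx, iteratedDeriv_iteratedPrimitive hcont]
  have hwmod : ∀ n, wmod k (iteratedDerivWithin r (iteratedPrimitive (rampSum h) r) (Icc 0 1))
      (ε (p n) * p n ^ (((r : ℝ) + 1) / k)) 0 1 ≤ p n ^ (r + 1) := by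
    intro n
    have hpn := (hp n).1
    refine wmod_le (pow_pos hpn _).le fun u x hu hut ha hb => ?_
    rw [symmDifference_congr hderiv hu ha hb]
    refine (abs_symmDifference_rampSum_le hk hpos hsum hanti h0.le n hu ha).trans ?_
    have hk0 : (k : ℝ) ≠ 0 := by exact_mod_cast (by omega : k ≠ 0)
    have hroot : (p n ^ (((r : ℝ) + 1) / k)) ^ k = p n ^ (r + 1) := by
      rw [← Real.rpow_mul_natCast hpn.le, div_mul_cancel₀ _ hk0]
      exact_mod_cast Real.rpow_natCast (p n) (r + 1)
    have hmain : ((n : ℝ) + 1) * (u / h n) ^ k ≤ 1 / 2 * p n ^ (r + 1) :=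
      calc ((n : ℝ) + 1) * (u / h n) ^ k
          ≤ (n + 1) * (ε (p n) * p n ^ (((r : ℝ) + 1) / k) / h n) ^ k := by
            have := hpos n
            gcongr
        _ = (n + 1) * (ε (p n) / h n) ^ k * p n ^ (r + 1) := by
            rw [← hroot]
            ring
        _ ≤ 1 / 2 * p n ^ (r + 1) := by
            gcongr
            exact hpε n
    have htail : ∑' j, h (j + (n + 1)) ≤ h (n + 1) * 2 :=
      (hgeom (h (n + 1))).tsum_eq ▸ ((summable_nat_add_iff (n + 1)).2 hsum).tsum_le_tsum
        (le_mul_half_pow hhalf (n + 1)) (hgeom (h (n + 1))).summable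
    linarith [hph n]
  refine ⟨iteratedPrimitive (rampSum h) r, (contDiff_iteratedPrimitive hcont r).contDiffOn, ?_⟩
  intro P M δ hδ
  have hplim : Tendsto p atTop (nhdsWithin 0 (Ioi 0)) :=
    tendsto_nhdsWithin_iff.2 ⟨squeeze_zero (fun n => (hp n).1.le) (fun n => (hp n).2.le)
      tendsto_one_div_add_atTop_nhds_zero_nat, Eventually.of_forall fun n => (hp n).1⟩
  have hδev : ∀ᶠ x : ℝ in nhdsWithin 0 (Ioi 0), x < δ := nhdsWithin_le_nhds (Iio_mem_nhds hδ)
  obtain ⟨n, ⟨hn, hn1⟩, hnδ⟩ := (hplim.eventually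
    ((eventually_mul_pow_lt_abs_sub_eval hlow hupp P (max M 0)).and (hmem 1 one_pos)
      |>.and hδev)).exists
  refine ⟨p n, (hp n).1, hn1.2, hnδ, lt_of_le_of_lt ?_ hn⟩
  exact mul_le_mul (le_max_left _ _) (hwmod n) (wmod_nonneg _ _ _ _ _) (le_max_right _ _)
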